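/- Let Ω ⊆ ℝⁿ be open, let f : Ω → ℝ be continuous, and let A be a smooth field of symmetric n×n real matrices on Ω. If f satisfies Hess f ≤ A at every point of Ω in the viscosity sense, then f satisfies Hess f ≤ A on Ω in the distributional sense. -/

import Mathlib

open Finset

/-- Second partial derivative `∂_j ∂_i h` at `p`: the `(i,j)` entry of the Hessian matrix. -/
noncomputable def hess2 {n : ℕ} (h : (Fin n → ℝ) → ℝ) (p : Fin n → ℝ) (i j : Fin n) : ℝ :=
  fderiv ℝ (fun x => fderiv ℝ h x (Pi.single i 1)) p (Pi.single j 1)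

/-!
If the second difference `f (x + w) + f (x - w) - 2 f x` exceeded the values of `A w w` on the ball
`closedBall x ‖w‖`, then a parabola in the direction `w`, bent down steeply in the transverse
directions, would touch `f` from below inside that ball with too large a second derivative. Hence
viscosity bounds are second difference bounds, and these, unlike the viscosity condition, visibly
survive averaging over translates. So mollifications `g` of `f` satisfy `D²g ≤ A + ε` classically
near the support of `V`; integrating by parts twice gives the distributional inequality for `g`, and
`ε → 0` gives it for `f`.
-/

open MeasureTheory Metric Set Filter Topology

section SecondDerivative

variable {E : Type*} [NormedAddCommGroup E] [NormedSpace ℝ E] {g : E → ℝ}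

lemma fderiv_fderiv_apply {x : E} (hg : DifferentiableAt ℝ (fderiv ℝ g) x) (v w : E) :
    fderiv ℝ (fun y => fderiv ℝ g y v) x w = fderiv ℝ (fderiv ℝ g) x w v := by
  simp [fderiv_clm_apply hg (differentiableAt_const v)]

lemma differentiable_fderiv_of_contDiff_two (hg : ContDiff ℝ 2 g) :
    Differentiable ℝ (fderiv ℝ g) :=
  (hg.fderiv_right (m := 1) (by norm_num)).differentiable one_ne_zero

lemma continuous_fderiv_fderiv (hg : ContDiff ℝ 2 g) : Continuous (fderiv ℝ (fderiv ℝ g)) :=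
  (hg.fderiv_right (m := 1) (by norm_num)).continuous_fderiv one_ne_zero

lemma continuous_fderiv_fderiv_apply (hg : ContDiff ℝ 2 g) (v w : E) :
    Continuous fun x => fderiv ℝ (fderiv ℝ g) x v w :=
  ((continuous_fderiv_fderiv hg).clm_apply continuous_const).clm_apply continuous_const

lemma deriv_deriv_comp_add_smul (hg : ContDiff ℝ 2 g) (x v : E) :
    deriv (deriv fun t : ℝ => g (x + t • v)) 0 = fderiv ℝ (fderiv ℝ g) x v v := by
  have deriv_along_line (F : E → ℝ) (hF : Differentiable ℝ F) (t : ℝ) :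
      deriv (fun t : ℝ => F (x + t • v)) t = fderiv ℝ F (x + t • v) v := by
    have hline : HasDerivAt (fun t : ℝ => x + t • v) v t := by
      simpa using ((hasDerivAt_id t).smul_const v).const_add x
    exact ((hF _).hasFDerivAt.comp_hasDerivAt t hline).deriv
  have hdiff := differentiable_fderiv_of_contDiff_two hg
  rw [funext (deriv_along_line g (hg.differentiable two_ne_zero)),
    deriv_along_line (fun y => fderiv ℝ g y v) (hdiff.clm_apply (differentiable_const v)),
    zero_smul, add_zero, fderiv_fderiv_apply (hdiff x)]

/-- The symmetric second difference of `f` at `x` with increment `w`. -/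
def secondDiff (f : E → ℝ) (x w : E) : ℝ := f (x + w) + f (x - w) - 2 * f x

lemma tendsto_add_neg_sub_two_mul_div_sq {u : ℝ → ℝ} (hu : ContDiff ℝ 2 u) :
    Tendsto (fun t => (u t + u (-t) - 2 * u 0) / t ^ 2) (𝓝[≠] 0) (𝓝 (deriv (deriv u) 0)) := by
  have htaylor : (fun t => u t - (u 0 + deriv u 0 * t + deriv (deriv u) 0 / 2 * t ^ 2))
      =o[𝓝 0] fun t => t ^ 2 := by
    refine (taylor_isLittleO_univ (x₀ := 0) (n := 2) (mod_cast hu)).congr (fun t => ?_) (by simp)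
    simp only [taylorWithinEval_succ, taylor_within_zero_eval, CharP.cast_eq_zero, zero_add,
      Nat.factorial_zero, Nat.cast_one, mul_one, inv_one, sub_zero, pow_one, one_mul,
      iteratedDerivWithin_univ, iteratedDeriv_succ, iteratedDeriv_zero, smul_eq_mul,
      Nat.factorial_one, Nat.reduceAdd]
    ring
  have htaylor_neg := htaylor.comp_tendsto (continuous_neg.tendsto' (0 : ℝ) 0 neg_zero)
  have hsum : (fun t => (u t + u (-t) - 2 * u 0) - deriv (deriv u) 0 * t ^ 2)
      =o[𝓝[≠] 0] fun t => t ^ 2 := by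
    refine ((htaylor.add (htaylor_neg.congr_right ?_)).congr_left fun t => ?_).mono
      nhdsWithin_le_nhds
    · simp
    · simp only [Function.comp_apply]
      ring
  rw [← tendsto_sub_nhds_zero_iff]
  refine hsum.tendsto_div_nhds_zero.congr' ?_
  filter_upwards [self_mem_nhdsWithin] with t (ht : t ≠ 0)
  field_simp

lemma tendsto_secondDiff_div_sq (hg : ContDiff ℝ 2 g) (x v : E) :
    Tendsto (fun t : ℝ => secondDiff g x (t • v) / t ^ 2) (𝓝[≠] 0)
      (𝓝 (fderiv ℝ (fderiv ℝ g) x v v)) := by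
  have hline : ContDiff ℝ 2 fun t : ℝ => g (x + t • v) := hg.comp (by fun_prop)
  simpa [secondDiff, sub_eq_add_neg, deriv_deriv_comp_add_smul hg] using
    tendsto_add_neg_sub_two_mul_div_sq hline

lemma fderiv_fderiv_eq_of_secondDiff_eq (hg : ContDiff ℝ 2 g) {x v : E} {m : ℝ}
    (hm : ∀ t : ℝ, secondDiff g x (t • v) = t ^ 2 * m) :
    fderiv ℝ (fderiv ℝ g) x v v = m := by
  refine tendsto_nhds_unique (tendsto_secondDiff_div_sq hg x v) (tendsto_const_nhds.congr' ?_)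
  filter_upwards [self_mem_nhdsWithin] with t (ht : t ≠ 0)
  rw [hm, mul_div_cancel_left₀ _ (pow_ne_zero 2 ht)]

lemma fderiv_fderiv_le_of_secondDiff_le (hg : ContDiff ℝ 2 g) {x v : E} {m : ℝ}
    (hm : ∀ᶠ t : ℝ in 𝓝[≠] 0, secondDiff g x (t • v) ≤ t ^ 2 * m) :
    fderiv ℝ (fderiv ℝ g) x v v ≤ m := by
  refine le_of_tendsto (tendsto_secondDiff_div_sq hg x v) ?_
  filter_upwards [hm, self_mem_nhdsWithin] with t ht (ht0 : t ≠ 0)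
  rwa [div_le_iff₀' (by positivity)]

end SecondDerivative

lemma exists_forall_pos_add_mul {X : Type*} [TopologicalSpace X] [T2Space X] {K : Set X}
    (hK : IsCompact K) {u N : X → ℝ} (hu : ContinuousOn u K) (hN : ContinuousOn N K)
    (hN0 : ∀ x ∈ K, 0 ≤ N x) (hpos : ∀ x ∈ K, N x = 0 → 0 < u x) :
    ∃ k : ℝ, ∀ x ∈ K, 0 < u x + k * N x := by
  let S : Set X := K ∩ u ⁻¹' Iic 0
  have hSK : S ⊆ K := inter_subset_left
  have hS : IsCompact S :=
    hK.of_isClosed_subset (hu.preimage_isClosed_of_isClosed hK.isClosed isClosed_Iic) hSK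
  have hNS : ∀ x ∈ S, 0 < N x := fun x hx =>
    (hN0 x hx.1).lt_of_ne' fun h => (hpos x hx.1 h).not_ge hx.2
  obtain ⟨C, hC⟩ := hS.exists_bound_of_continuousOn
    ((hu.mono hSK).div (hN.mono hSK) fun x hx => (hNS x hx).ne')
  refine ⟨|C| + 1, fun x hx => ?_⟩
  rcases le_or_gt (u x) 0 with hux | hux
  · have hNx : 0 < N x := hNS x ⟨hx, hux⟩
    have hratio : -|C| ≤ u x / N x :=
      neg_le_of_abs_le ((hC x ⟨hx, hux⟩).trans (le_abs_self C))
    rw [le_div_iff₀ hNx] at hratio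
    linarith
  · have := hN0 x hx
    positivity

section Viscosity

variable {E : Type*} [NormedAddCommGroup E] [NormedSpace ℝ E]

/-- `Hess f ≤ B` at `p` in the viscosity sense, `B` being given as a bilinear form. The condition
involves only second derivatives of the test function `h`, so instead of normalizing `h p = f p` we
let `f - h` have a local minimum at `p`; test functions are globally defined. -/
def ViscosityHessianLE (f : E → ℝ) (B : E →L[ℝ] E →L[ℝ] ℝ) (p : E) : Prop :=
  ∀ h : E → ℝ, ContDiff ℝ 2 h → IsLocalMin (f - h) p →
    ∀ v, fderiv ℝ (fderiv ℝ h) p v v ≤ B v v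

lemma ViscosityHessianLE.congr {f g : E → ℝ} {B : E →L[ℝ] E →L[ℝ] ℝ} {p : E}
    (hf : ViscosityHessianLE f B p) (hfg : f =ᶠ[𝓝 p] g) : ViscosityHessianLE g B p :=
  fun h hh hmin => hf h hh (hmin.congr (hfg.symm.sub .rfl))

variable [FiniteDimensional ℝ E]

/-- The squared Euclidean length of the component of `y` along `ker ℓ` in the decomposition
`E = ker ℓ ⊕ ℝ w`, when `ℓ w = 1`. -/
noncomputable def transverseSq (ℓ : E →L[ℝ] ℝ) (w y : E) : ℝ :=
  ‖toEuclidean (y - ℓ y • w)‖ ^ 2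

variable {ℓ : E →L[ℝ] ℝ} {w : E}

lemma contDiff_transverseSq : ContDiff ℝ 2 (transverseSq ℓ w) :=
  (toEuclidean.contDiff.comp (contDiff_id.sub (ℓ.contDiff.smul contDiff_const))).norm_sq ℝ

lemma transverseSq_add_smul (hw : ℓ w = 1) (y : E) (t : ℝ) :
    transverseSq ℓ w (y + t • w) = transverseSq ℓ w y := by
  simp [transverseSq, hw, add_smul]

lemma eq_or_eq_neg_of_transverseSq_eq_zero {y : E} (hw : w ≠ 0)
    (hy : transverseSq ℓ w y = 0) (hnorm : ‖y‖ = ‖w‖) : y = w ∨ y = -w := by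
  have hline : y = ℓ y • w := by
    rwa [transverseSq, sq_eq_zero_iff, norm_eq_zero, EmbeddingLike.map_eq_zero_iff,
      sub_eq_zero] at hy
  have hcoef : |ℓ y| = 1 := by
    rw [hline, norm_smul, Real.norm_eq_abs] at hnorm
    exact (mul_eq_right₀ (norm_ne_zero_iff.2 hw)).1 hnorm
  rcases eq_or_eq_neg_of_abs_eq hcoef with h | h 
  · exact .inl (by rwa [h, one_smul] at hline)
  · exact .inr (by rwa [h, neg_one_smul] at hline)

/-- The test function touching `f` from below when the second difference of `f` at `x` along `w`
exceeds `a`: a parabola of second derivative `a` in the direction `w`, bent down transversally with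
strength `k`. -/
noncomputable def barrier (ℓ : E →L[ℝ] ℝ) (w x : E) (a b k : ℝ) (z : E) : ℝ :=
  a / 2 * ℓ (z - x) ^ 2 + b * ℓ (z - x) - k * transverseSq ℓ w (z - x)

lemma contDiff_barrier {x : E} {a b k : ℝ} : ContDiff ℝ 2 (barrier ℓ w x a b k) := by
  have hN : ContDiff ℝ 2 fun z => transverseSq ℓ w (z - x) :=
    contDiff_transverseSq.comp (contDiff_id.sub contDiff_const)
  unfold barrier
  fun_prop

lemma fderiv_fderiv_barrier (hw : ℓ w = 1) (x : E) (a b k : ℝ) (p : E) :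
    fderiv ℝ (fderiv ℝ (barrier ℓ w x a b k)) p w w = a := by
  refine fderiv_fderiv_eq_of_secondDiff_eq contDiff_barrier fun t => ?_
  have hplus : p + t • w - x = (p - x) + t • w := by abel
  have hminus : p - t • w - x = (p - x) + (-t) • w := by rw [neg_smul]; abel
  simp only [secondDiff, barrier, hplus, hminus, transverseSq_add_smul hw, map_add, map_smul, hw,
    smul_eq_mul]
  ring

lemma exists_barrier_lt_on_sphere {f : E → ℝ} {x : E} {a : ℝ} (hw : w ≠ 0) (hℓ : ℓ w = 1)
    (hf : ContinuousOn f (sphere x ‖w‖)) (ha : a < secondDiff f x w) :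
    ∃ b k : ℝ, ∀ z ∈ sphere x ‖w‖, f x + barrier ℓ w x a b k z < f z := by
  let b : ℝ := (f (x + w) - f (x - w)) / 2
  let u : E → ℝ := fun z => f z - (f x + barrier ℓ w x a b 0 z)
  have hpos : ∀ z ∈ sphere x ‖w‖, transverseSq ℓ w (z - x) = 0 → 0 < u z := by
    unfold secondDiff at ha
    intro z hz hNz
    rcases eq_or_eq_neg_of_transverseSq_eq_zero hw hNz (mem_sphere_iff_norm.1 hz) with h | h
    · obtain rfl : z = x + w := by rw [← h]; abel
      simp only [u, b, barrier, h, hℓ]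
      linarith
    · obtain rfl : z = x - w := by rw [sub_eq_add_neg, ← h]; abel
      simp only [u, b, barrier, h, map_neg, hℓ]
      linarith
  obtain ⟨k, hk⟩ := exists_forall_pos_add_mul (isCompact_sphere x ‖w‖) (u := u)
    (hf.sub (continuous_const.add contDiff_barrier.continuous).continuousOn)
    (contDiff_transverseSq.continuous.comp (continuous_sub_right x)).continuousOn
    (fun z _ => sq_nonneg _) hpos
  refine ⟨b, k, fun z hz => ?_⟩
  have := hk z hz
  simp only [u, barrier, Function.comp_apply] at this ⊢
  linarith

lemma exists_touching_of_lt_secondDiff {f : E → ℝ} {x : E} {a : ℝ} (hw : w ≠ 0)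
    (hf : ContinuousOn f (closedBall x ‖w‖)) (ha : a < secondDiff f x w) :
    ∃ p ∈ ball x ‖w‖, ∃ h : E → ℝ, ContDiff ℝ 2 h ∧ IsLocalMin (f - h) p ∧
      fderiv ℝ (fderiv ℝ h) p w w = a := by
  obtain ⟨ℓ, hℓ⟩ := SeparatingDual.exists_eq_one (R := ℝ) hw
  obtain ⟨b, k, hsphere⟩ :=
    exists_barrier_lt_on_sphere hw hℓ (hf.mono sphere_subset_closedBall) ha
  have hcenter : barrier ℓ w x a b k x = 0 := by simp [barrier, transverseSq]
  obtain ⟨p, hp, hmin⟩ := exists_isLocalMin_mem_ball (f := f - barrier ℓ w x a b k)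
    (hf.sub contDiff_barrier.continuous.continuousOn) (mem_closedBall_self (norm_nonneg w))
    fun z hz => by simpa [hcenter] using lt_sub_iff_add_lt.2 (hsphere z hz)
  exact ⟨p, hp, _, contDiff_barrier, hmin, fderiv_fderiv_barrier hℓ x a b k p⟩

lemma secondDiff_le_of_viscosityHessianLE {f : E → ℝ} {B : E → E →L[ℝ] E →L[ℝ] ℝ} {x : E} {m : ℝ}
    (hf : ContinuousOn f (closedBall x ‖w‖))
    (hvisc : ∀ p ∈ closedBall x ‖w‖, ViscosityHessianLE f (B p) p)
    (hm : ∀ p ∈ closedBall x ‖w‖, B p w w ≤ m) : secondDiff f x w ≤ m := by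
  rcases eq_or_ne w 0 with rfl | hw
  · have := hm x (by simp)
    simp_all [secondDiff, two_mul]
  by_contra! hlt
  obtain ⟨m', hmm', hm'⟩ := exists_between hlt
  obtain ⟨p, hp, h, hh, hmin, hD⟩ := exists_touching_of_lt_secondDiff hw hf hm'
  have hp' := ball_subset_closedBall hp
  exact (((hvisc p hp' h hh hmin w).trans (hm p hp')).trans_lt (hmm'.trans_eq hD.symm)).false

end Viscosity

lemma exists_continuous_eventuallyEq_nhdsSet {X : Type*} [TopologicalSpace X] [NormalSpace X]
    {K Ω : Set X} (hK : IsClosed K) (hΩ : IsOpen Ω) (hKΩ : K ⊆ Ω) {f : X → ℝ}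
    (hf : ContinuousOn f Ω) : ∃ F : X → ℝ, Continuous F ∧ f =ᶠ[𝓝ˢ K] F := by
  obtain ⟨U, hU, hKU, hUΩ⟩ := normal_exists_closure_subset hK hΩ hKΩ
  obtain ⟨F, hF⟩ := ContinuousMap.exists_restrict_eq (isClosed_closure (s := U))
    ⟨(closure U).domRestrict f, (hf.mono hUΩ).domRestrict⟩
  have hfF : EqOn f F (closure U) := fun x hx => (DFunLike.congr_fun hF ⟨x, hx⟩).symm
  exact ⟨F, F.continuous,
    mem_of_superset (hU.mem_nhdsSet.2 hKU) fun x hx => hfF (subset_closure hx)⟩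

section Mollification

open scoped Convolution

variable {E : Type*} [NormedAddCommGroup E] [NormedSpace ℝ E] [FiniteDimensional ℝ E]
  [MeasurableSpace E] [BorelSpace E] {μ : Measure E} [μ.IsAddHaarMeasure]
  {f : E → ℝ} {φ : ContDiffBump (0 : E)}

lemma contDiff_normed_convolution (hf : Continuous f) :
    ContDiff ℝ 2 (φ.normed μ ⋆[ContinuousLinearMap.lsmul ℝ ℝ, μ] f) :=
  φ.hasCompactSupport_normed.contDiff_convolution_left _ (φ.contDiff_normed (n := 2))
    hf.locallyIntegrable

lemma secondDiff_normed_convolution_le (hf : Continuous f) {x w : E} {m : ℝ}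
    (hm : ∀ y ∈ ball x φ.rOut, secondDiff f y w ≤ m) :
    secondDiff (φ.normed μ ⋆[ContinuousLinearMap.lsmul ℝ ℝ, μ] f) x w ≤ m := by
  have hprod (z : E) : Integrable (fun s => φ.normed μ s * f (z - s)) μ :=
    (φ.continuous_normed.mul (by fun_prop)).integrable_of_hasCompactSupport
      φ.hasCompactSupport_normed.mul_right
  have hdiff : secondDiff (φ.normed μ ⋆[ContinuousLinearMap.lsmul ℝ ℝ, μ] f) x w =
      ∫ s, φ.normed μ s * secondDiff f (x - s) w ∂μ := by
    simp only [secondDiff, convolution_def, ContinuousLinearMap.lsmul_apply, smul_eq_mul]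
    rw [← integral_add (hprod _) (hprod _), ← integral_const_mul,
      ← integral_sub (by exact (hprod _).add (hprod _)) ((hprod _).const_mul 2)]
    congr with s
    rw [add_sub_right_comm x w s, sub_right_comm x w s]
    ring
  have hpointwise (s : E) : φ.normed μ s * secondDiff f (x - s) w ≤ φ.normed μ s * m := by
    by_cases hs : s ∈ Function.support (φ.normed μ)
    · rw [φ.support_normed_eq] at hs
      exact mul_le_mul_of_nonneg_left (hm _ (by simpa [mem_ball_iff_norm] using hs))
        (φ.nonneg_normed s)
    · simp [Function.notMem_support.1 hs]
  calc secondDiff _ x w = ∫ s, φ.normed μ s * secondDiff f (x - s) w ∂μ := hdiff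
    _ ≤ ∫ s, φ.normed μ s * m ∂μ := by
      refine integral_mono ?_ (φ.integrable_normed.mul_const m) hpointwise
      refine (φ.continuous_normed.mul ?_).integrable_of_hasCompactSupport
        φ.hasCompactSupport_normed.mul_right
      unfold secondDiff
      fun_prop
    _ = m := by rw [integral_mul_const, φ.integral_normed, one_mul]

end Mollification

section Approximation

lemma exists_forall_dist_lt_of_isCompact {X Y : Type*} [PseudoMetricSpace X] [PseudoMetricSpace Y]
    {K : Set X} (hK : IsCompact K) {F : X → Y} (hF : ∀ x ∈ K, ContinuousAt F x) {ε : ℝ}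
    (hε : 0 < ε) : ∃ δ > 0, ∀ x ∈ K, ∀ y, dist y x < δ → dist (F y) (F x) < ε := by
  obtain ⟨δ, hδ, h⟩ := mem_uniformity_dist.1
    (hK.uniformContinuousAt_of_continuousAt F hF (dist_mem_uniformity hε))
  refine ⟨δ, hδ, fun x hx y hy => ?_⟩
  rw [dist_comm] at hy ⊢
  exact h hy hx

variable {E : Type*} [NormedAddCommGroup E] [NormedSpace ℝ E]

lemma apply_self_le_of_dist_le {B₁ B₂ : E →L[ℝ] E →L[ℝ] ℝ} {ε : ℝ} (h : dist B₁ B₂ ≤ ε) (v : E) :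
    B₁ v v ≤ B₂ v v + ε * ‖v‖ ^ 2 := by
  have hnorm : (B₁ - B₂) v v ≤ ε * ‖v‖ ^ 2 :=
    calc (B₁ - B₂) v v ≤ ‖B₁ - B₂‖ * ‖v‖ * ‖v‖ :=
          (Real.le_norm_self _).trans ((B₁ - B₂).le_opNorm₂ v v)
      _ ≤ ε * ‖v‖ ^ 2 := by
        rw [mul_assoc, ← sq, ← dist_eq_norm B₁ B₂]
        gcongr
  simp only [sub_apply] at hnorm
  linarith

variable [FiniteDimensional ℝ E] {Ω K : Set E} {f : E → ℝ} {B : E → E →L[ℝ] E →L[ℝ] ℝ} {ε : ℝ}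

lemma exists_contDiff_approx_of_viscosityHessianLE_of_continuous (hΩ : IsOpen Ω) (hf : Continuous f)
    (hB : ContinuousOn B Ω) (hvisc : ∀ p ∈ Ω, ViscosityHessianLE f (B p) p)
    (hK : IsCompact K) (hKΩ : K ⊆ Ω) (hε : 0 < ε) :
    ∃ g : E → ℝ, ContDiff ℝ 2 g ∧ ∀ x ∈ K, |g x - f x| ≤ ε ∧
      ∀ v, fderiv ℝ (fderiv ℝ g) x v v ≤ B x v v + ε * ‖v‖ ^ 2 := by
  borelize E
  obtain ⟨r, hr, hrΩ⟩ := hK.exists_thickening_subset_open hΩ hKΩ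
  obtain ⟨s, hs, hfs⟩ :=
    exists_forall_dist_lt_of_isCompact hK (fun x _ => hf.continuousAt) hε
  obtain ⟨τ, hτ, hBτ⟩ := exists_forall_dist_lt_of_isCompact hK (F := B)
    (fun x hx => hB.continuousAt (hΩ.mem_nhds (hKΩ hx))) hε
  obtain ⟨δ, hδ, hδr, hδs, hδτ⟩ : ∃ δ > 0, δ ≤ r ∧ δ ≤ s ∧ δ ≤ τ :=
    ⟨min r (min s τ), by positivity, by simp⟩
  let φ : ContDiffBump (0 : E) := ⟨δ / 4, δ / 2, by positivity, by linarith⟩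
  refine ⟨_, contDiff_normed_convolution (μ := Measure.addHaar) (φ := φ) hf, fun x hx =>
    ⟨φ.dist_normed_convolution_le hf.aestronglyMeasurable fun y hy => ?_, fun v => ?_⟩⟩
  · have hy' : dist y x < δ / 2 := hy
    exact (hfs x hx y (by linarith)).le
  have hsmall : ∀ᶠ t : ℝ in 𝓝[≠] 0, ‖t • v‖ < δ / 2 :=
    (Continuous.tendsto' (by fun_prop) 0 0 (by simp)).eventually_lt_const (half_pos hδ)
      |>.filter_mono nhdsWithin_le_nhds
  refine fderiv_fderiv_le_of_secondDiff_le (contDiff_normed_convolution hf) ?_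
  filter_upwards [hsmall] with t ht
  refine secondDiff_normed_convolution_le hf fun y hy => ?_
  have hdist : ∀ p ∈ closedBall y ‖t • v‖, dist p x < δ := fun p hp =>
    calc dist p x ≤ dist p y + dist y x := dist_triangle p y x
      _ < δ / 2 + δ / 2 := add_lt_add_of_le_of_lt (hp.trans ht.le) hy
      _ = δ := add_halves δ
  refine secondDiff_le_of_viscosityHessianLE (B := B) hf.continuousOn
    (fun p hp => hvisc p (hrΩ (mem_thickening_iff.2 ⟨x, hx, (hdist p hp).trans_le hδr⟩)))
    fun p hp => ?_
  have hBp := apply_self_le_of_dist_le (hBτ x hx p ((hdist p hp).trans_le hδτ)).le v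
  simpa [← mul_assoc, ← sq] using mul_le_mul_of_nonneg_left hBp (sq_nonneg t)

lemma exists_contDiff_approx_of_viscosityHessianLE (hΩ : IsOpen Ω) (hf : ContinuousOn f Ω)
    (hB : ContinuousOn B Ω) (hvisc : ∀ p ∈ Ω, ViscosityHessianLE f (B p) p)
    (hK : IsCompact K) (hKΩ : K ⊆ Ω) (hε : 0 < ε) :
    ∃ g : E → ℝ, ContDiff ℝ 2 g ∧ ∀ x ∈ K, |g x - f x| ≤ ε ∧
      ∀ v, fderiv ℝ (fderiv ℝ g) x v v ≤ B x v v + ε * ‖v‖ ^ 2 := by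
  obtain ⟨F, hF, hfF⟩ := exists_continuous_eventuallyEq_nhdsSet hK.isClosed hΩ hKΩ hf
  obtain ⟨U, hU, hKU, hUF⟩ := eventually_nhdsSet_iff_exists.1 hfF
  have hviscF : ∀ p ∈ Ω ∩ U, ViscosityHessianLE F (B p) p := fun p hp =>
    (hvisc p hp.1).congr (eventually_of_mem (hU.mem_nhds hp.2) hUF)
  obtain ⟨g, hg, hgK⟩ := exists_contDiff_approx_of_viscosityHessianLE_of_continuous (hΩ.inter hU) hF
    (hB.mono inter_subset_left) hviscF hK (subset_inter hKΩ hKU) hε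
  exact ⟨g, hg, fun x hx => by simpa only [hUF x (hKU hx)] using hgK x hx⟩

end Approximation

section IntegrationByParts

variable {E : Type*} [NormedAddCommGroup E] [NormedSpace ℝ E] [FiniteDimensional ℝ E]
  [MeasurableSpace E] [BorelSpace E] {μ : Measure E} [μ.IsAddHaarMeasure] {g W : E → ℝ}

lemma integral_mul_fderiv_eq_neg_of_hasCompactSupport (hg : ContDiff ℝ 1 g) (hW : ContDiff ℝ 1 W)
    (hWc : HasCompactSupport W) (v : E) :
    ∫ x, g x * fderiv ℝ W x v ∂μ = -∫ x, fderiv ℝ g x v * W x ∂μ := by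
  have hg' : Continuous fun x => fderiv ℝ g x v :=
    (hg.continuous_fderiv one_ne_zero).clm_apply continuous_const
  have hW' : Continuous fun x => fderiv ℝ W x v :=
    (hW.continuous_fderiv one_ne_zero).clm_apply continuous_const
  exact integral_mul_fderiv_eq_neg_fderiv_mul_of_integrable
    ((hg'.mul hW.continuous).integrable_of_hasCompactSupport hWc.mul_left)
    ((hg.continuous.mul hW').integrable_of_hasCompactSupport (hWc.fderiv_apply ℝ v).mul_left)
    ((hg.continuous.mul hW.continuous).integrable_of_hasCompactSupport hWc.mul_left)
    (fun x _ => hg.differentiable one_ne_zero x) (fun x _ => hW.differentiable one_ne_zero x)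

lemma integral_mul_fderiv_fderiv (hg : ContDiff ℝ 2 g) (hW : ContDiff ℝ 2 W)
    (hWc : HasCompactSupport W) (v w : E) :
    ∫ x, g x * fderiv ℝ (fderiv ℝ W) x v w ∂μ = ∫ x, fderiv ℝ (fderiv ℝ g) x w v * W x ∂μ := by
  have contDiff_partial {a : E → ℝ} (ha : ContDiff ℝ 2 a) (v : E) :
      ContDiff ℝ 1 fun x => fderiv ℝ a x v :=
    (ha.fderiv_right (m := 1) (by norm_num)).clm_apply contDiff_const
  simp only [← fderiv_fderiv_apply (differentiable_fderiv_of_contDiff_two hW _),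
    ← fderiv_fderiv_apply (differentiable_fderiv_of_contDiff_two hg _)]
  rw [integral_mul_fderiv_eq_neg_of_hasCompactSupport (hg.of_le one_le_two)
      (contDiff_partial hW w) (hWc.fderiv_apply ℝ w),
    integral_mul_fderiv_eq_neg_of_hasCompactSupport (contDiff_partial hg v)
      (hW.of_le one_le_two) hWc, neg_neg]

end IntegrationByParts

section DoubleDivergence

variable {E ι : Type*} [NormedAddCommGroup E] [NormedSpace ℝ E] {b : Module.Basis ι ℝ E} {V : E → E}

lemma support_repr_mul_repr_subset (i j : ι) :
    Function.support (fun y => b.repr (V y) i * b.repr (V y) j) ⊆ Function.support V :=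
  fun y hy hVy => hy (by simp [hVy])

lemma contDiff_repr_mul_repr [FiniteDimensional ℝ E] (hV : ContDiff ℝ 2 V) (i j : ι) :
    ContDiff ℝ 2 fun y => b.repr (V y) i * b.repr (V y) j :=
  ((b.coord i).toContinuousLinearMap.contDiff.comp hV).mul
    ((b.coord j).toContinuousLinearMap.contDiff.comp hV)

variable [Fintype ι]

lemma apply_apply_eq_sum_repr (b : Module.Basis ι ℝ E) (L : E →L[ℝ] E →L[ℝ] ℝ) (v w : E) :
    L v w = ∑ i, ∑ j, L (b i) (b j) * (b.repr v i * b.repr w j) := by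
  conv_lhs => rw [← b.sum_repr v, ← b.sum_repr w]
  simp only [map_sum, map_smul, _root_.sum_apply, smul_apply, smul_eq_mul, Finset.mul_sum]
  rw [Finset.sum_comm]
  exact Finset.sum_congr rfl fun i _ => Finset.sum_congr rfl fun j _ => by ring

variable (b V) in
/-- The double divergence `∑ i j, ∂ⱼ∂ᵢ (Vⁱ Vʲ)` of `V ⊗ V`, in the coordinates given by `b`. -/
noncomputable def doubleDiv (x : E) : ℝ :=
  ∑ i, ∑ j, fderiv ℝ (fderiv ℝ fun y => b.repr (V y) i * b.repr (V y) j) x (b j) (b i)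

lemma doubleDiv_eq_zero {x : E} (hx : x ∉ tsupport V) : doubleDiv b V x = 0 := by
  refine Finset.sum_eq_zero fun i _ => Finset.sum_eq_zero fun j _ => ?_
  have hxij : x ∉ tsupport (fderiv ℝ (fderiv ℝ fun y => b.repr (V y) i * b.repr (V y) j)) :=
    fun h => hx <| closure_mono (support_repr_mul_repr_subset i j)
      (tsupport_fderiv_subset ℝ (tsupport_fderiv_subset ℝ h))
  simp [image_eq_zero_of_notMem_tsupport hxij]

variable [FiniteDimensional ℝ E]

lemma continuous_doubleDiv (hV : ContDiff ℝ 2 V) : Continuous (doubleDiv b V) :=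
  continuous_finsetSum _ fun i _ => continuous_finsetSum _ fun j _ =>
    continuous_fderiv_fderiv_apply (contDiff_repr_mul_repr hV i j) _ _

variable [MeasurableSpace E] [BorelSpace E] {μ : Measure E} [μ.IsAddHaarMeasure]

lemma integral_mul_doubleDiv {g : E → ℝ} (hg : ContDiff ℝ 2 g) (hV : ContDiff ℝ 2 V)
    (hVc : HasCompactSupport V) :
    ∫ x, g x * doubleDiv b V x ∂μ = ∫ x, fderiv ℝ (fderiv ℝ g) x (V x) (V x) ∂μ := by
  let W (i j : ι) (y : E) : ℝ := b.repr (V y) i * b.repr (V y) j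
  have hW (i j : ι) : ContDiff ℝ 2 (W i j) := contDiff_repr_mul_repr hV i j
  have hWc (i j : ι) : HasCompactSupport (W i j) := hVc.mono (support_repr_mul_repr_subset i j)
  have hleft (i j : ι) : Integrable
      (fun x => g x * fderiv ℝ (fderiv ℝ (W i j)) x (b j) (b i)) μ :=
    (hg.continuous.mul (continuous_fderiv_fderiv_apply (hW i j) _ _))
      |>.integrable_of_hasCompactSupport <| .mul_left <|
        (((hWc i j).fderiv ℝ).fderiv ℝ).comp_left
          (g := fun L : E →L[ℝ] E →L[ℝ] ℝ => L (b j) (b i)) (by simp)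
  have hright (i j : ι) : Integrable
      (fun x => fderiv ℝ (fderiv ℝ g) x (b i) (b j) * W i j x) μ :=
    ((continuous_fderiv_fderiv_apply hg _ _).mul (hW i j).continuous)
      |>.integrable_of_hasCompactSupport (hWc i j).mul_left
  calc ∫ x, g x * doubleDiv b V x ∂μ
      = ∑ i, ∑ j, ∫ x, g x * fderiv ℝ (fderiv ℝ (W i j)) x (b j) (b i) ∂μ := by
        simp only [doubleDiv, Finset.mul_sum]
        simp_rw [← integral_finsetSum _ fun j _ => hleft _ j]
        exact integral_finsetSum _ fun i _ => integrable_finsetSum _ fun j _ => hleft i j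
    _ = ∑ i, ∑ j, ∫ x, fderiv ℝ (fderiv ℝ g) x (b i) (b j) * W i j x ∂μ := by
        simp_rw [integral_mul_fderiv_fderiv hg (hW _ _) (hWc _ _)]
    _ = ∫ x, ∑ i, ∑ j, fderiv ℝ (fderiv ℝ g) x (b i) (b j) * W i j x ∂μ := by
        simp_rw [integral_finsetSum _ fun i _ => integrable_finsetSum _ fun j _ => hright i j,
          integral_finsetSum _ fun j _ => hright _ j]
    _ = ∫ x, fderiv ℝ (fderiv ℝ g) x (V x) (V x) ∂μ := by
        simp only [apply_apply_eq_sum_repr b (fderiv ℝ (fderiv ℝ g) _) (V _), W]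

end DoubleDivergence

section DistributionalBound

lemma setIntegral_mul_le_add_of_abs_sub_le {X : Type*} [TopologicalSpace X] [T2Space X]
    [MeasurableSpace X] [OpensMeasurableSpace X] {μ : Measure X} [IsFiniteMeasureOnCompacts μ]
    {K : Set X} {f g d : X → ℝ} {ε : ℝ} (hK : IsCompact K) (hf : ContinuousOn f K)
    (hg : ContinuousOn g K) (hd : ContinuousOn d K) (hfg : ∀ x ∈ K, |g x - f x| ≤ ε) :
    ∫ x in K, f x * d x ∂μ ≤ ∫ x in K, g x * d x ∂μ + ε * ∫ x in K, |d x| ∂μ := by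
  have hgd : IntegrableOn (fun x => g x * d x) K μ := (hg.mul hd).integrableOn_compact hK
  have hd' : IntegrableOn (fun x => ε * |d x|) K μ :=
    (hd.abs.const_mul ε).integrableOn_compact hK
  rw [← integral_const_mul, ← integral_add hgd hd']
  refine setIntegral_mono_on ((hf.mul hd).integrableOn_compact hK) (hgd.add hd')
    hK.measurableSet fun x hx => ?_
  have hdiff : (f x - g x) * d x ≤ ε * |d x| :=
    calc (f x - g x) * d x ≤ |g x - f x| * |d x| := by
          rw [abs_sub_comm, ← abs_mul]
          exact le_abs_self _
      _ ≤ ε * |d x| := by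
          gcongr
          exact hfg x hx
  linarith

variable {E ι : Type*} [NormedAddCommGroup E] [NormedSpace ℝ E] [FiniteDimensional ℝ E]
  [Fintype ι] [MeasurableSpace E] [BorelSpace E] {μ : Measure E} [μ.IsAddHaarMeasure]
  {b : Module.Basis ι ℝ E} {V : E → E} {f : E → ℝ} {B : E → E →L[ℝ] E →L[ℝ] ℝ}

lemma setIntegral_mul_doubleDiv_le_add {K : Set E} {g : E → ℝ} {ε : ℝ} (hK : IsCompact K)
    (hf : ContinuousOn f K) (hB : ContinuousOn B K) (hg : ContDiff ℝ 2 g)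
    (hgK : ∀ x ∈ K, |g x - f x| ≤ ε ∧
      ∀ v, fderiv ℝ (fderiv ℝ g) x v v ≤ B x v v + ε * ‖v‖ ^ 2)
    (hV : ContDiff ℝ 2 V) (hVK : tsupport V ⊆ K) :
    ∫ x in K, f x * doubleDiv b V x ∂μ ≤ ∫ x in K, B x (V x) (V x) ∂μ +
      ε * (∫ x in K, ‖V x‖ ^ 2 ∂μ + ∫ x in K, |doubleDiv b V x| ∂μ) := by
  have hVcont : Continuous V := hV.continuous
  have hBV : IntegrableOn (fun x => B x (V x) (V x)) K μ :=
    ((hB.clm_apply hVcont.continuousOn).clm_apply hVcont.continuousOn).integrableOn_compact hK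
  have hVsq : IntegrableOn (fun x => ε * ‖V x‖ ^ 2) K μ :=
    (continuous_const.mul (hVcont.norm.pow 2)).continuousOn.integrableOn_compact hK
  have hD2g : IntegrableOn (fun x => fderiv ℝ (fderiv ℝ g) x (V x) (V x)) K μ :=
    (((continuous_fderiv_fderiv hg).clm_apply hVcont).clm_apply hVcont)
      |>.continuousOn.integrableOn_compact hK
  have hVzero : ∀ x, x ∉ K → V x = 0 := fun x hx =>
    image_eq_zero_of_notMem_tsupport fun h => hx (hVK h)
  have hparts : ∫ x in K, g x * doubleDiv b V x ∂μ =
      ∫ x in K, fderiv ℝ (fderiv ℝ g) x (V x) (V x) ∂μ := by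
    rw [setIntegral_eq_integral_of_forall_compl_eq_zero fun x hx => by
        rw [doubleDiv_eq_zero fun h => hx (hVK h), mul_zero],
      setIntegral_eq_integral_of_forall_compl_eq_zero fun x hx => by simp [hVzero x hx],
      integral_mul_doubleDiv hg hV (hK.of_isClosed_subset (isClosed_tsupport V) hVK)]
  calc ∫ x in K, f x * doubleDiv b V x ∂μ
      ≤ ∫ x in K, g x * doubleDiv b V x ∂μ + ε * ∫ x in K, |doubleDiv b V x| ∂μ :=
        setIntegral_mul_le_add_of_abs_sub_le hK hf hg.continuous.continuousOn
          (continuous_doubleDiv hV).continuousOn fun x hx => (hgK x hx).1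
    _ ≤ ∫ x in K, (B x (V x) (V x) + ε * ‖V x‖ ^ 2) ∂μ +
          ε * ∫ x in K, |doubleDiv b V x| ∂μ := by
        rw [hparts]
        exact add_le_add (setIntegral_mono_on hD2g (hBV.add hVsq) hK.measurableSet
          fun x hx => (hgK x hx).2 (V x)) le_rfl
    _ = _ := by
        rw [integral_add hBV hVsq, integral_const_mul]
        ring

theorem setIntegral_mul_doubleDiv_le_of_viscosityHessianLE {Ω : Set E} (hΩ : IsOpen Ω)
    (hf : ContinuousOn f Ω) (hB : ContinuousOn B Ω)
    (hvisc : ∀ p ∈ Ω, ViscosityHessianLE f (B p) p) (hV : ContDiff ℝ 2 V)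
    (hVc : HasCompactSupport V) (hVΩ : tsupport V ⊆ Ω) :
    ∫ x in Ω, f x * doubleDiv b V x ∂μ ≤ ∫ x in Ω, B x (V x) (V x) ∂μ := by
  have restrict_eq (F : E → ℝ) (hF : ∀ x ∉ tsupport V, F x = 0) :
      ∫ x in Ω, F x ∂μ = ∫ x in tsupport V, F x ∂μ :=
    setIntegral_eq_of_subset_of_forall_sdiff_eq_zero hΩ.measurableSet hVΩ fun x hx => hF x hx.2
  rw [restrict_eq _ fun x hx => by rw [doubleDiv_eq_zero hx, mul_zero],
    restrict_eq _ fun x hx => by simp [image_eq_zero_of_notMem_tsupport hx]]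
  set C : ℝ := ∫ x in tsupport V, ‖V x‖ ^ 2 ∂μ + ∫ x in tsupport V, |doubleDiv b V x| ∂μ
  have hlim : Tendsto (fun ε => ∫ x in tsupport V, B x (V x) (V x) ∂μ + ε * C) (𝓝[>] 0)
      (𝓝 (∫ x in tsupport V, B x (V x) (V x) ∂μ)) :=
    (Continuous.tendsto' (by fun_prop) 0 _ (by simp)).mono_left nhdsWithin_le_nhds
  refine ge_of_tendsto hlim ?_
  filter_upwards [self_mem_nhdsWithin] with ε (hε : 0 < ε)
  obtain ⟨g, hg, hgK⟩ :=
    exists_contDiff_approx_of_viscosityHessianLE hΩ hf hB hvisc hVc.isCompact hVΩ hε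
  exact setIntegral_mul_doubleDiv_le_add hVc (hf.mono hVΩ) (hB.mono hVΩ) hg hgK hV subset_rfl

end DistributionalBound

section Coordinates

variable {ι : Type*} [Fintype ι] [DecidableEq ι]

/-- The bilinear form `(v, w) ↦ ∑ i j, A i j * v i * w j` as a continuous bilinear map, which makes
a matrix field comparable with second derivatives. -/
noncomputable def matrixForm (A : Matrix ι ι ℝ) :
    (ι → ℝ) →L[ℝ] (ι → ℝ) →L[ℝ] ℝ :=
  (Matrix.toBilin' A).toContinuousBilinearMap

lemma matrixForm_apply (A : Matrix ι ι ℝ) (v w : ι → ℝ) :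
    matrixForm A v w = ∑ i, ∑ j, A i j * v i * w j := by
  simp [matrixForm, Matrix.toBilin'_apply, mul_comm]

lemma continuousOn_matrixForm {X : Type*} [TopologicalSpace X] {S : Set X}
    {A : X → Matrix ι ι ℝ} (hA : ∀ i j, ContinuousOn (fun x => A x i j) S) :
    ContinuousOn (fun x => matrixForm (A x)) S := by
  refine continuousOn_clm_apply.2 fun v => continuousOn_clm_apply.2 fun w => ?_
  simp only [matrixForm_apply]
  fun_prop

variable {n : ℕ}

lemma hess2_eq_fderiv_fderiv {h : (Fin n → ℝ) → ℝ} (hh : ContDiff ℝ 2 h) (p : Fin n → ℝ)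
    (i j : Fin n) :
    hess2 h p i j = fderiv ℝ (fderiv ℝ h) p (Pi.single j 1) (Pi.single i 1) :=
  fderiv_fderiv_apply (differentiable_fderiv_of_contDiff_two hh p) _ _

lemma sum_hess2_mul_mul {h : (Fin n → ℝ) → ℝ} (hh : ContDiff ℝ 2 h) (p v : Fin n → ℝ) :
    ∑ i, ∑ j, hess2 h p i j * v i * v j = fderiv ℝ (fderiv ℝ h) p v v := by
  rw [apply_apply_eq_sum_repr (Pi.basisFun ℝ (Fin n)), Finset.sum_comm]
  simp only [hess2_eq_fderiv_fderiv hh, Pi.basisFun_repr, Pi.basisFun_apply, mul_assoc,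
    mul_comm (v _) (v _)]

lemma viscosityHessianLE_matrixForm {Ω : Set (Fin n → ℝ)} (hΩ : IsOpen Ω)
    {f : (Fin n → ℝ) → ℝ} {A : Matrix (Fin n) (Fin n) ℝ} {p : Fin n → ℝ} (hp : p ∈ Ω)
    (hvisc : ∀ (U : Set (Fin n → ℝ)) (h : (Fin n → ℝ) → ℝ),
      IsOpen U → p ∈ U → U ⊆ Ω → ContDiffOn ℝ 2 h U → h p = f p →
      (∀ x ∈ U, h x ≤ f x) →
      ∀ v : Fin n → ℝ, 0 ≤ ∑ i, ∑ j, (A i j - hess2 h p i j) * v i * v j) :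
    ViscosityHessianLE f (matrixForm A) p := by
  intro h hh hmin v
  let k : (Fin n → ℝ) → ℝ := fun x => h x + (f p - h p)
  have hk : ContDiff ℝ 2 k := hh.add contDiff_const
  obtain ⟨U, hUsub, hU, hpU⟩ := _root_.eventually_nhds_iff.1 (hmin.and (hΩ.mem_nhds hp))
  have hkf : ∀ x ∈ U, k x ≤ f x := fun x hx => by
    have : f p - h p ≤ f x - h x := (hUsub x hx).1
    simp only [k]
    linarith
  have hfderiv : fderiv ℝ k = fderiv ℝ h := funext fun x => fderiv_add_const _
  have hnonneg := hvisc U k hU hpU (fun x hx => (hUsub x hx).2) hk.contDiffOn (by simp [k]) hkf v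
  simpa only [sub_mul, Finset.sum_sub_distrib, ← matrixForm_apply, sum_hess2_mul_mul hk, sub_nonneg,
    hfderiv] using hnonneg

lemma doubleDiv_basisFun {V : (Fin n → ℝ) → Fin n → ℝ} (hV : ContDiff ℝ 2 V) (x : Fin n → ℝ) :
    doubleDiv (Pi.basisFun ℝ (Fin n)) V x =
      ∑ i, ∑ j, hess2 (fun y => V y i * V y j) x i j := by
  have hVij (i j : Fin n) : ContDiff ℝ 2 fun y => V y i * V y j :=
    (contDiff_pi.1 hV i).mul (contDiff_pi.1 hV j)
  simp only [doubleDiv, hess2_eq_fderiv_fderiv (hVij _ _), Pi.basisFun_repr, Pi.basisFun_apply]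

end Coordinates

theorem viscosity_implies_distributional_hessian_general {n : ℕ}
    {Ω : Set (Fin n → ℝ)} (hΩ : IsOpen Ω) {f : (Fin n → ℝ) → ℝ} (hf : ContinuousOn f Ω)
    {A : (Fin n → ℝ) → Matrix (Fin n) (Fin n) ℝ}
    (hA : ∀ i j, ContinuousOn (fun x => A x i j) Ω)
    (hvisc : ∀ p ∈ Ω, ∀ (U : Set (Fin n → ℝ)) (h : (Fin n → ℝ) → ℝ),
      IsOpen U → p ∈ U → U ⊆ Ω → ContDiffOn ℝ 2 h U → h p = f p →
      (∀ x ∈ U, h x ≤ f x) →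
      ∀ v : Fin n → ℝ,
        0 ≤ ∑ i, ∑ j, (A p i j - hess2 h p i j) * v i * v j)
    {V : (Fin n → ℝ) → Fin n → ℝ} (hV : ContDiff ℝ 2 V) (hVc : HasCompactSupport V)
    (hVΩ : tsupport V ⊆ Ω) :
    ∫ x in Ω, f x * ∑ i, ∑ j, hess2 (fun y => V y i * V y j) x i j ≤
      ∫ x in Ω, ∑ i, ∑ j, A x i j * V x i * V x j := by
  have hviscB : ∀ p ∈ Ω, ViscosityHessianLE f (matrixForm (A p)) p :=
    fun p hp => viscosityHessianLE_matrixForm hΩ hp (hvisc p hp)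
  simpa only [doubleDiv_basisFun hV, matrixForm_apply] using
    setIntegral_mul_doubleDiv_le_of_viscosityHessianLE (b := Pi.basisFun ℝ (Fin n))
      (μ := volume) hΩ hf (continuousOn_matrixForm hA) hviscB hV hVc hVΩ

/-- If `Hess f ≤ A` holds at every point of `Ω` in the viscosity sense, then it holds
on `Ω` in the distributional sense. -/
theorem viscosity_implies_distributional_hessian {n : ℕ}
    (Ω : Set (Fin n → ℝ)) (hΩ : IsOpen Ω)
    (f : (Fin n → ℝ) → ℝ) (hf : ContinuousOn f Ω)
    (A : (Fin n → ℝ) → Matrix (Fin n) (Fin n) ℝ)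
    (hAsmooth : ∀ i j, ContDiffOn ℝ (⊤ : ℕ∞) (fun x => A x i j) Ω)
    (hAsymm : ∀ x ∈ Ω, ∀ i j, A x i j = A x j i)
    (hvisc : ∀ p ∈ Ω, ∀ (U : Set (Fin n → ℝ)) (h : (Fin n → ℝ) → ℝ),
      IsOpen U → p ∈ U → U ⊆ Ω → ContDiffOn ℝ 2 h U → h p = f p →
      (∀ x ∈ U, h x ≤ f x) →
      ∀ v : Fin n → ℝ,
        0 ≤ ∑ i, ∑ j, (A p i j - hess2 h p i j) * v i * v j) :
    ∀ V : (Fin n → ℝ) → (Fin n → ℝ), ContDiff ℝ (⊤ : ℕ∞) V → HasCompactSupport V →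
      tsupport V ⊆ Ω →
      ∫ x in Ω, f x * ∑ i, ∑ j, hess2 (fun y => V y i * V y j) x i j ≤
        ∫ x in Ω, ∑ i, ∑ j, A x i j * V x i * V x j := by
  intro V hV
  exact viscosity_implies_distributional_hessian_general hΩ hf
    (fun i j => (hAsmooth i j).continuousOn) hvisc (contDiff_infty.1 hV 2)
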